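/- arXiv:2210.15325 — 2 statements merged into one kernel-verified Lean document; each statement's English description precedes it below -/
import Mathlib

section
/- For n ≥ 1, the geodesic transversal number of the rook's graph satisfies gt(K_n □ K_n) = n² − 2n + 2. -/
open SimpleGraph

/-- A geodesic (shortest path) in `G`: a path whose length equals the distance
between its endpoints. -/
def IsGeodesic {V : Type*} (G : SimpleGraph V) {u v : V} (p : G.Walk u v) : Prop :=
  p.IsPath ∧ p.length = G.dist u v

/-- A maximal geodesic: a geodesic that is not contained as a subpath of any longer
geodesic, equivalently it cannot be extended at either end to a longer geodesic. -/
def IsMaxGeodesic {V : Type*} (G : SimpleGraph V) {u v : V} (p : G.Walk u v) : Prop :=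
  IsGeodesic G p ∧
  (∀ w (h : G.Adj w u), ¬ IsGeodesic G (SimpleGraph.Walk.cons h p)) ∧
  (∀ w (h : G.Adj v w), ¬ IsGeodesic G (p.concat h))

/-- A set of vertices that is the vertex set of some maximal geodesic of `G`. -/
def IsMaxGeodesicSet {V : Type*} (G : SimpleGraph V) (s : Set V) : Prop :=
  ∃ (u v : V) (p : G.Walk u v), IsMaxGeodesic G p ∧ s = {x | x ∈ p.support}

/-- A geodesic packing: a family of pairwise vertex-disjoint maximal geodesics. -/
def IsGeodesicPacking {V : Type*} (G : SimpleGraph V) (P : Set (Set V)) : Prop :=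
  (∀ s ∈ P, IsMaxGeodesicSet G s) ∧ P.Pairwise Disjoint

/-- The geodesic packing number `gpack(G)`. -/
noncomputable def gpackNum {V : Type*} (G : SimpleGraph V) : ℕ :=
  sSup {k | ∃ P : Finset (Set V), IsGeodesicPacking G ↑P ∧ P.card = k}

/-- A geodesic transversal: a vertex set hitting every maximal geodesic. -/
def IsGeodesicTransversal {V : Type*} (G : SimpleGraph V) (S : Set V) : Prop :=
  ∀ s, IsMaxGeodesicSet G s → (S ∩ s).Nonempty

/-- The geodesic transversal number `gt(G)`. -/
noncomputable def gtransNum {V : Type*} (G : SimpleGraph V) : ℕ :=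
  sInf {k | ∃ S : Finset V, IsGeodesicTransversal G ↑S ∧ S.card = k}

theorem isGeodesic_iff_length_eq_dist {V : Type*} (G : SimpleGraph V) {u v : V} (p : G.Walk u v) :
    IsGeodesic G p ↔ p.length = G.dist u v :=
  ⟨And.right, fun h => ⟨p.isPath_of_length_eq_dist h, h⟩⟩

/-- The rook's graph on the square board `α × α`. -/
abbrev rookGraph (α : Type*) : SimpleGraph (α × α) := (⊤ : SimpleGraph α) □ (⊤ : SimpleGraph α)

theorem rookGraph_dist {α : Type*} [DecidableEq α] (u v : α × α) :
    (rookGraph α).dist u v = (if u.1 = v.1 then 0 else 1) + (if u.2 = v.2 then 0 else 1) := by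
  rw [SimpleGraph.dist, edist_boxProd, edist_top, edist_top]
  split_ifs <;> rfl

theorem isMaxGeodesicSet_corner {α : Type*} {a a' b b' : α} (ha : a' ≠ a) (hb : b ≠ b') :
    IsMaxGeodesicSet (rookGraph α) {(a', b), (a, b), (a, b')} := by
  classical
  have h₁ : (rookGraph α).Adj (a', b) (a, b) := by simp [boxProd_adj, ha]
  have h₂ : (rookGraph α).Adj (a, b) (a, b') := by simp [boxProd_adj, hb]
  refine ⟨_, _, .cons h₁ (.cons h₂ .nil), ⟨?_, ?_, ?_⟩, by ext; simp⟩
  · rw [isGeodesic_iff_length_eq_dist, rookGraph_dist]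
    simp [ha, hb]
  all_goals
    intro w h
    rw [isGeodesic_iff_length_eq_dist, rookGraph_dist]
    simp only [Walk.length_cons, Walk.length_nil, Walk.length_concat]
    split_ifs <;> omega

theorem exists_corner_of_isMaxGeodesic {α : Type*} [Nontrivial α] {u v : α × α}
    {p : (rookGraph α).Walk u v} (hp : IsMaxGeodesic (rookGraph α) p) :
    ∃ a a' b b', a' ≠ a ∧ b ≠ b' ∧ (a', b) ∈ p.support ∧ (a, b) ∈ p.support ∧
      (a, b') ∈ p.support := by
  classical
  obtain ⟨hg, -, hmax⟩ := hp
  simp only [isGeodesic_iff_length_eq_dist, rookGraph_dist, Walk.length_concat] at hg hmax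
  obtain ⟨u₁, u₂⟩ := u
  match p with
  | .nil =>
    obtain ⟨a, ha⟩ := exists_ne u₁
    exact (hmax (a, u₂) (by simp [boxProd_adj, ha.symm]) (by simp [ha.symm])).elim
  | .cons h .nil =>
    obtain ⟨v₁, v₂⟩ := v
    obtain ⟨a, ha⟩ := exists_ne v₁
    obtain ⟨b, hb⟩ := exists_ne v₂
    have := hmax (a, v₂)
    have := hmax (v₁, b)
    simp only [boxProd_adj, top_adj, Walk.length_cons, Walk.length_nil] at *
    grind
  | .cons (v := w) h (.cons h' .nil) =>
    obtain ⟨w₁, w₂⟩ := w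
    obtain ⟨v₁, v₂⟩ := v
    have huw := boxProd_adj.mp h
    have hwv := boxProd_adj.mp h'
    simp only [top_adj, Walk.length_cons, Walk.length_nil, Walk.support_cons,
      Walk.support_nil] at *
    refine ⟨w₁, if u₁ = w₁ then v₁ else u₁, w₂, if u₁ = w₁ then u₂ else v₂, ?_⟩
    grind
  | .cons _ (.cons _ (.cons _ _)) =>
    simp only [Walk.length_cons] at hg
    split_ifs at hg <;> omega

theorem isGeodesicTransversal_rookGraph_iff {α : Type*} [Nontrivial α] {S : Set (α × α)} :
    IsGeodesicTransversal (rookGraph α) S ↔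
      ∀ a a' b b', a' ≠ a → b ≠ b' → (a', b) ∈ S ∨ (a, b) ∈ S ∨ (a, b') ∈ S := by
  constructor
  · intro h a a' b b' ha hb
    obtain ⟨x, hxS, hx⟩ := h _ (isMaxGeodesicSet_corner ha hb)
    simp only [Set.mem_insert_iff, Set.mem_singleton_iff] at hx
    grind
  · rintro h _ ⟨u, v, p, hp, rfl⟩
    obtain ⟨a, a', b, b', ha, hb, h₁, h₂, h₃⟩ := exists_corner_of_isMaxGeodesic hp
    rcases h a a' b b' ha hb with h | h | h
    exacts [⟨_, h, h₁⟩, ⟨_, h, h₂⟩, ⟨_, h, h₃⟩]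

/-- A set of squares in which no square has both a row-mate and a column-mate has at most
`2n - 2` elements. -/
theorem card_add_two_le_of_corner_free {α : Type*} [Fintype α] [DecidableEq α] [Nontrivial α]
    {T : Finset (α × α)}
    (hT : ∀ a a' b b', a' ≠ a → b ≠ b' → (a', b) ∈ T → (a, b) ∈ T → (a, b') ∉ T) :
    T.card + 2 ≤ 2 * Fintype.card α := by
  have hα : 2 ≤ Fintype.card α := Fintype.one_lt_card
  set A := T.filter fun x => ∀ b, (x.1, b) ∈ T → b = x.2 with hA
  set B := T.filter fun x => ¬ ∀ b, (x.1, b) ∈ T → b = x.2 with hB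
  have hAB : A.card + B.card = T.card := Finset.card_filter_add_card_filter_not _
  have hAi : (A.image Prod.fst).card = A.card := by
    apply Finset.card_image_of_injOn
    rintro ⟨a, b⟩ h ⟨a', b'⟩ h' (rfl : a = a')
    simp only [hA, Finset.coe_filter, Set.mem_ofPred_eq] at h h'
    rw [h'.2 b h.1]
  have hBcol : ∀ x ∈ B, ∀ a, (a, x.2) ∈ T → a = x.1 := by
    rintro ⟨a, b⟩ h a' h'
    simp only [hB, Finset.mem_filter, not_forall] at h
    grind
  have hBi : (B.image Prod.snd).card = B.card := by
    apply Finset.card_image_of_injOn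
    rintro ⟨a, b⟩ h ⟨a', b'⟩ h' (rfl : b = b')
    rw [hBcol _ h' a (Finset.mem_of_mem_filter _ h)]
  have hAle : A.card ≤ Fintype.card α := hAi ▸ Finset.card_le_univ _
  have hBle : B.card ≤ Fintype.card α := hBi ▸ Finset.card_le_univ _
  rcases A.eq_empty_or_nonempty with h | ⟨x, hx⟩
  · simp only [h, Finset.card_empty] at hAB
    omega
  rcases B.eq_empty_or_nonempty with h | ⟨y, hy⟩
  · simp only [h, Finset.card_empty] at hAB
    omega
  have h₁ : A.card < Fintype.card α := by
    rw [← hAi]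
    apply Finset.card_lt_univ_of_notMem (x := y.1)
    simp only [Finset.mem_image, not_exists, not_and]
    rintro ⟨a, b⟩ hz (rfl : a = y.1)
    simp only [hA, hB, Finset.mem_filter] at hz hy
    grind
  have h₂ : B.card < Fintype.card α := by
    rw [← hBi]
    apply Finset.card_lt_univ_of_notMem (x := x.2)
    simp only [Finset.mem_image, not_exists, not_and]
    rintro ⟨a, b⟩ hz (rfl : b = x.2)
    have := hBcol _ hz x.1 (Finset.mem_of_mem_filter _ hx)
    simp only [hA, hB, Finset.mem_filter] at hz hx
    grind
  omega

theorem isLeast_card_geodesicTransversal_rookGraph {α : Type*} [Fintype α] [Nontrivial α] :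
    IsLeast {k | ∃ S : Finset (α × α), IsGeodesicTransversal (rookGraph α) ↑S ∧ S.card = k}
      (Fintype.card α ^ 2 + 2 - 2 * Fintype.card α) := by
  classical
  simp only [isGeodesicTransversal_rookGraph_iff, Finset.mem_coe]
  constructor
  · obtain ⟨o⟩ : Nonempty α := inferInstance
    refine ⟨insert (o, o) ({o}ᶜ ×ˢ {o}ᶜ), ?_, ?_⟩
    · intro a a' b b' ha hb
      simp only [Finset.mem_insert, Finset.mem_product, Finset.mem_compl, Finset.mem_singleton,
        Prod.mk.injEq]
      grind
    · rw [Finset.card_insert_of_notMem (by simp), Finset.card_product, Finset.card_compl,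
        Finset.card_singleton]
      obtain ⟨m, hm⟩ := Nat.exists_eq_add_of_lt (Fintype.card_pos (α := α))
      rw [hm]
      simp only [zero_add, Nat.add_sub_cancel]
      have : (m + 1) ^ 2 + 2 = m * m + 1 + 2 * (m + 1) := by ring
      omega
  · rintro _ ⟨S, hS, rfl⟩
    have hT := card_add_two_le_of_corner_free (T := Sᶜ) (by
      intro a a' b b' ha hb
      simp only [Finset.mem_compl]
      grind)
    have hc := S.card_add_card_compl
    rw [Fintype.card_prod, ← sq] at hc
    omega

theorem gtransNum_eq_one_of_unique {V : Type*} [Unique V] (G : SimpleGraph V) :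
    gtransNum G = 1 := by
  have hmax : IsMaxGeodesicSet G {default} := by
    refine ⟨default, default, .nil, ⟨by simp [isGeodesic_iff_length_eq_dist], ?_, ?_⟩, by simp⟩
    all_goals exact fun w h => (h.ne (Subsingleton.elim _ _)).elim
  refine IsLeast.csInf_eq ⟨⟨{default}, ?_, by simp⟩, ?_⟩
  · rintro _ ⟨u, v, p, -, rfl⟩
    exact ⟨u, by simp [Unique.eq_default u], p.start_mem_support⟩
  · rintro _ ⟨S, hS, rfl⟩
    obtain ⟨x, hx, -⟩ := hS _ hmax
    exact Finset.card_pos.mpr ⟨x, hx⟩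

theorem gt_rook (n : ℕ) (hn : 1 ≤ n) :
    gtransNum ((⊤ : SimpleGraph (Fin n)) □ (⊤ : SimpleGraph (Fin n))) = n ^ 2 + 2 - 2 * n := by
  obtain rfl | hn := hn.eq_or_lt
  · have : Unique (Fin 1 × Fin 1) := Unique.mk' _
    exact gtransNum_eq_one_of_unique _
  · have := Fin.nontrivial_iff_two_le.mpr hn
    simpa [gtransNum] using (isLeast_card_geodesicTransversal_rookGraph (α := Fin n)).csInf_eq
end

section
/- If T is a tree, then gpack(T) = gt(T). -/
open SimpleGraph

/-- If `t` is a vertex of `s` at minimum distance from `r`, then a shortest path from `r` to `t`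
followed by a path inside `s` is a path. -/
lemma SimpleGraph.Walk.IsPath.append_of_forall_dist_le {V : Type*} {G : SimpleGraph V} {s : Set V}
    {r t x : V} (hmin : ∀ y ∈ s, G.dist r t ≤ G.dist r y) {q : G.Walk r t} (hq : q.IsPath)
    (hql : q.length = G.dist r t) {w : G.Walk t x} (hw : w.IsPath)
    (hws : ∀ z ∈ w.support, z ∈ s) : (q.append w).IsPath := by
  classical
  rw [Walk.isPath_def, Walk.support_append, List.nodup_append']
  have hnd := hw.support_nodup
  refine ⟨hq.support_nodup, hnd.tail, fun y hyq hyw ↦ ?_⟩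
  have hyt : y ≠ t := by
    rintro rfl
    rw [← Walk.cons_tail_support] at hnd
    exact (List.nodup_cons.1 hnd).1 hyw
  have h₁ := hmin y (hws y (List.mem_of_mem_tail hyw))
  have h₂ := dist_le (q.takeUntil y hyq)
  have h₃ := Walk.length_takeUntil_lt_length hyq hyt
  omega

lemma SimpleGraph.exists_isPath_of_preconnected_induce {V : Type*} {G : SimpleGraph V} {s : Set V}
    (hs : (G.induce s).Preconnected) {x y : V} (hx : x ∈ s) (hy : y ∈ s) :
    ∃ p : G.Walk x y, p.IsPath ∧ ∀ z ∈ p.support, z ∈ s := by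
  classical
  obtain ⟨p⟩ := hs ⟨x, hx⟩ ⟨y, hy⟩
  refine ⟨(p.map (Embedding.induce s).toHom).bypass, Walk.bypass_isPath _, fun z hz ↦ ?_⟩
  obtain ⟨a, -, rfl⟩ := List.mem_map.1 <|
    Walk.support_map (Embedding.induce s).toHom p ▸ Walk.support_bypass_subset_support _ hz
  exact a.2

/-- In a tree rooted at `r`, if two intersecting subtrees have highest vertices `t` and `t'`, and
`t'` is at least as high as `t`, then the second subtree contains `t`. -/
lemma SimpleGraph.IsTree.mem_of_dist_le {V : Type*} {T : SimpleGraph V} (hT : T.IsTree)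
    {s s' : Set V} (hs : (T.induce s).Preconnected) (hs' : (T.induce s').Preconnected)
    {r t t' x : V} (ht : t ∈ s) (ht' : t' ∈ s') (hmin : ∀ y ∈ s, T.dist r t ≤ T.dist r y)
    (hmin' : ∀ y ∈ s', T.dist r t' ≤ T.dist r y) (hle : T.dist r t' ≤ T.dist r t)
    (hx : x ∈ s) (hx' : x ∈ s') : t ∈ s' := by
  obtain ⟨q, hq, hql⟩ := hT.connected.exists_path_of_dist r t
  obtain ⟨q', hq', hql'⟩ := hT.connected.exists_path_of_dist r t'
  obtain ⟨w, hw, hws⟩ := exists_isPath_of_preconnected_induce hs ht hx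
  obtain ⟨w', hw', hws'⟩ := exists_isPath_of_preconnected_induce hs' ht' hx'
  have heq : q.append w = q'.append w' := congrArg Subtype.val <|
    (hT.isAcyclic.subsingleton_path r x).elim
    ⟨_, hq.append_of_forall_dist_le hmin hql hw hws⟩
    ⟨_, hq'.append_of_forall_dist_le hmin' hql' hw' hws'⟩
  have hget := congrArg (Walk.getVert · q.length) heq
  simp only [Walk.getVert_append] at hget
  rw [if_neg (lt_irrefl _), if_neg (by omega), Nat.sub_self, Walk.getVert_zero] at hget
  exact hget ▸ hws' _ (Walk.getVert_mem_support _ _)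

/-- A finite family of nonempty subtrees of a tree contains pairwise disjoint members that are at
least as many as the vertices of some set hitting the whole family. -/
lemma SimpleGraph.IsTree.exists_pairwise_disjoint_card_ge {V : Type*} [Finite V]
    {T : SimpleGraph V} (hT : T.IsTree) (F : Finset (Set V))
    (hF : ∀ s ∈ F, s.Nonempty ∧ (T.induce s).Preconnected) :
    ∃ P ⊆ F, ∃ S : Finset V, (P : Set (Set V)).Pairwise Disjoint ∧
      (∀ s ∈ F, ((S : Set V) ∩ s).Nonempty) ∧ S.card ≤ P.card := by
  classical
  obtain ⟨r⟩ := hT.connected.nonempty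
  have htop : ∀ s : Set V, ∃ t, s ∈ F → t ∈ s ∧ ∀ y ∈ s, T.dist r t ≤ T.dist r y := fun s ↦ by
    by_cases hs : s ∈ F
    · obtain ⟨t, ht⟩ := s.exists_min_image (T.dist r) s.toFinite (hF s hs).1
      exact ⟨t, fun _ ↦ ht⟩
    · exact ⟨r, fun h ↦ absurd h hs⟩
  choose top htop using htop
  induction F using Finset.strongInduction with
  | H F ih =>
    obtain rfl | hne := F.eq_empty_or_nonempty
    · exact ⟨∅, subset_rfl, ∅, by simp⟩
    obtain ⟨s, hs, hmax⟩ := F.exists_max_image (fun s ↦ T.dist r (top s)) hne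
    have hsub : F.filter (top s ∉ ·) ⊆ F := Finset.filter_subset _ _
    obtain ⟨P, hPF, S, hP, hS, hcard⟩ := ih _
      (Finset.filter_ssubset.2 ⟨s, hs, not_not.2 (htop s hs).1⟩)
      (fun a ha ↦ hF a (hsub ha)) (fun a ha ↦ htop a (hsub ha))
    have hdisj : ∀ a ∈ P, Disjoint s a := fun a ha ↦ by
      obtain ⟨haF, hta⟩ := Finset.mem_filter.1 (hPF ha)
      refine Set.disjoint_left.2 fun x hx hxa ↦ hta ?_
      exact hT.mem_of_dist_le (hF s hs).2 (hF a haF).2 (htop s hs).1 (htop a haF).1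
        (htop s hs).2 (htop a haF).2 (hmax a haF) hx hxa
    have hsP : s ∉ P := fun h ↦ (Finset.mem_filter.1 (hPF h)).2 (htop s hs).1
    refine ⟨insert s P, Finset.insert_subset hs (hPF.trans hsub), insert (top s) S, ?_, ?_, ?_⟩
    · rw [Finset.coe_insert]
      exact hP.insert fun a ha _ ↦ ⟨hdisj a ha, (hdisj a ha).symm⟩
    · intro a ha
      by_cases hta : top s ∈ a
      · exact ⟨top s, by simp, hta⟩
      · obtain ⟨x, hx, hxa⟩ := hS a (Finset.mem_filter.2 ⟨ha, hta⟩)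
        exact ⟨x, by simp [Finset.mem_coe.1 hx], hxa⟩
    · rw [Finset.card_insert_of_notMem hsP]
      exact (Finset.card_insert_le _ _).trans (by omega)

lemma IsMaxGeodesicSet.nonempty {V : Type*} {G : SimpleGraph V} {s : Set V}
    (hs : IsMaxGeodesicSet G s) : s.Nonempty := by
  obtain ⟨u, v, p, -, rfl⟩ := hs
  exact ⟨u, p.start_mem_support⟩

lemma IsMaxGeodesicSet.preconnected_induce {V : Type*} {G : SimpleGraph V} {s : Set V}
    (hs : IsMaxGeodesicSet G s) : (G.induce s).Preconnected := by
  obtain ⟨u, v, p, -, rfl⟩ := hs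
  exact p.connected_induce_support.preconnected

lemma IsGeodesicPacking.card_le_card {V : Type*} {G : SimpleGraph V} {P : Finset (Set V)}
    {S : Finset V} (hP : IsGeodesicPacking G (P : Set (Set V)))
    (hS : IsGeodesicTransversal G (S : Set V)) : P.card ≤ S.card := by
  refine Finset.card_le_card_of_forall_subsingleton (fun s x ↦ x ∈ s) (fun s hs ↦ ?_) ?_
  · obtain ⟨x, hx, hxs⟩ := hS s (hP.1 s hs)
    exact ⟨x, hx, hxs⟩
  · rintro x - a ⟨ha, hxa⟩ b ⟨hb, hxb⟩
    by_contra hab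
    exact Set.disjoint_left.1 (hP.2 ha hb hab) hxa hxb

theorem gpack_eq_gt_tree {V : Type*} [Fintype V] (T : SimpleGraph V)
    (hc : T.Connected) (ha : T.IsAcyclic) :
    gpackNum T = gtransNum T := by
  classical
  obtain ⟨P, hPF, S, hdisj, hS, hle⟩ := IsTree.exists_pairwise_disjoint_card_ge ⟨hc, ha⟩
    {s | IsMaxGeodesicSet T s}.toFinite.toFinset
    fun s hs ↦ have hs : IsMaxGeodesicSet T s := by simpa using hs
      ⟨hs.nonempty, hs.preconnected_induce⟩
  have hP : IsGeodesicPacking T (P : Set (Set V)) :=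
    ⟨fun s hs ↦ by simpa using hPF hs, hdisj⟩
  have hS : IsGeodesicTransversal T (S : Set V) := fun s hs ↦ hS s (by simpa using hs)
  have hcard : P.card = S.card := (hP.card_le_card hS).antisymm hle
  have hpack : IsGreatest {k | ∃ P : Finset (Set V), IsGeodesicPacking T ↑P ∧ P.card = k}
      P.card := by
    refine ⟨⟨P, hP, rfl⟩, ?_⟩
    rintro _ ⟨P', hP', rfl⟩
    exact hcard ▸ hP'.card_le_card hS
  have htrans : IsLeast {k | ∃ S : Finset V, IsGeodesicTransversal T ↑S ∧ S.card = k}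
      S.card := by
    refine ⟨⟨S, hS, rfl⟩, ?_⟩
    rintro _ ⟨S', hS', rfl⟩
    exact hcard ▸ hP.card_le_card hS'
  rw [gpackNum, gtransNum, hpack.csSup_eq, htrans.csInf_eq, hcard]
end
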